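/- arXiv:1502.02148 — 2 statements merged into one kernel-verified Lean document; each statement's English description precedes it below -/
import Mathlib

section
/- There exists a constant C > 0 such that for every real x ≥ 2, the quantity (∑ over pairs (I, J) ∈ P(x) of N(I ⊔ J)) / (number of pairs in P(x)) differs from (π/(4·ζ_{ℚ(i)}(2)))·log x by at most C. In other words, the expected norm of the greatest common divisor of two nonzero ideals of ℤ[i] chosen uniformly and independently from those of norm at most x is (π/(4·ζ_{ℚ(i)}(2)))·log x + O(1). -/
open Real

/-- The absolute norm of an ideal of `ℤ[i]`: the cardinality of the quotient ring. -/
noncomputable def normI (I : Ideal GaussianInt) : ℕ := Nat.card (GaussianInt ⧸ I)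

/-- `P x` : pairs of nonzero ideals of `ℤ[i]` with both norms at most `x`. -/
noncomputable def P (x : ℝ) : Set (Ideal GaussianInt × Ideal GaussianInt) :=
  {p | p.1 ≠ ⊥ ∧ p.2 ≠ ⊥ ∧ (normI p.1 : ℝ) ≤ x ∧ (normI p.2 : ℝ) ≤ x}

/-- `ζ_{ℚ(i)}(2)`, the sum of `1/N(I)²` over nonzero ideals of `ℤ[i]`. -/
noncomputable def zetaQi2 : ℝ := ∑' I : {I : Ideal GaussianInt // I ≠ ⊥}, 1 / (normI I.1 : ℝ) ^ 2


noncomputable section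

abbrev NZ : Type := {I : Ideal GaussianInt // I ≠ ⊥}

def gaussEquiv : GaussianInt ≃ₗ[ℤ] (Fin 2 → ℤ) where
  toFun z := ![z.re, z.im]
  invFun v := ⟨v 0, v 1⟩
  map_add' x y := by ext i; fin_cases i <;> simp
  map_smul' c x := by ext i; fin_cases i <;> simp
  left_inv x := by ext <;> simp
  right_inv v := by ext i; fin_cases i <;> simp

def gaussBasis : Module.Basis (Fin 2) ℤ GaussianInt := Module.Basis.ofEquivFun gaussEquiv

instance gaussFree : Module.Free ℤ GaussianInt := Module.Free.of_basis gaussBasis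
instance gaussFin : Module.Finite ℤ GaussianInt := Module.Finite.of_basis gaussBasis

lemma normI_eq (I : Ideal GaussianInt) : normI I = Ideal.absNorm I := rfl

lemma gauss_norm (z : GaussianInt) : Algebra.norm ℤ z = z.re ^ 2 + z.im ^ 2 := by
  rw [Algebra.norm_eq_matrix_det gaussBasis, Matrix.det_fin_two]
  have h0 : gaussBasis 0 = (⟨1, 0⟩ : GaussianInt) := by
    simp [gaussBasis, gaussEquiv]
  have h1 : gaussBasis 1 = (⟨0, 1⟩ : GaussianInt) := by
    simp [gaussBasis, gaussEquiv]
  have hr : ∀ (w : GaussianInt) , gaussBasis.repr w 0 = w.re := fun w => by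
    simp [gaussBasis, gaussEquiv]
  have hi : ∀ (w : GaussianInt) , gaussBasis.repr w 1 = w.im := fun w => by
    simp [gaussBasis, gaussEquiv]
  simp only [Algebra.leftMulMatrix_eq_repr_mul, h0, h1, hr, hi]
  simp
  ring

lemma normI_span (z : GaussianInt) : normI (Ideal.span {z}) = (z.re ^ 2 + z.im ^ 2).natAbs := by
  rw [normI_eq, Ideal.absNorm_span_singleton, gauss_norm]

lemma normI_mul (I J : Ideal GaussianInt) : normI (I * J) = normI I * normI J := by
  simp [normI_eq]

lemma normI_pos {I : Ideal GaussianInt} (h : I ≠ ⊥) : 1 ≤ normI I := by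
  rw [normI_eq, Nat.one_le_iff_ne_zero]
  rwa [Ne, Ideal.absNorm_eq_zero_iff]

lemma normI_eq_one {I : Ideal GaussianInt} : normI I = 1 ↔ I = ⊤ := by
  rw [normI_eq, Ideal.absNorm_eq_one_iff]

def nu (p : ℕ × ℕ) : ℕ := (p.1 + 1) ^ 2 + p.2 ^ 2

def toNZ (p : ℕ × ℕ) : NZ :=
  ⟨Ideal.span {(⟨(p.1 : ℤ) + 1, (p.2 : ℤ)⟩ : GaussianInt)}, by
    rw [Ne, Ideal.span_singleton_eq_bot]
    intro h
    have := congrArg Zsqrtd.re h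
    simp at this
    omega⟩

lemma normI_toNZ (p : ℕ × ℕ) : normI (toNZ p).1 = nu p := by
  simp only [toNZ, normI_span, nu]
  zify
  rw [abs_of_nonneg (by positivity)]

lemma gauss_unit (u : GaussianInt) (hu : IsUnit u) :
    u = ⟨1, 0⟩ ∨ u = ⟨-1, 0⟩ ∨ u = ⟨0, 1⟩ ∨ u = ⟨0, -1⟩ := by
  have h := (Zsqrtd.norm_eq_one_iff' (by norm_num) u).mpr hu
  obtain ⟨a, b⟩ := u
  simp only [Zsqrtd.norm_def] at h
  have ha : a ^ 2 ≤ 1 := by nlinarith [mul_self_nonneg b]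
  have hb : b ^ 2 ≤ 1 := by nlinarith [mul_self_nonneg a]
  have ha1 := abs_le.mp ((sq_le_one_iff_abs_le_one a).mp ha)
  have hb1 := abs_le.mp ((sq_le_one_iff_abs_le_one b).mp hb)
  obtain ⟨ha1, ha2⟩ := ha1
  obtain ⟨hb1, hb2⟩ := hb1
  interval_cases a <;> interval_cases b <;> simp_all

lemma toNZ_inj : Function.Injective toNZ := by
  rintro ⟨a, b⟩ ⟨c, d⟩ h
  have h := congrArg Subtype.val h
  simp only [toNZ] at h
  rw [Ideal.span_singleton_eq_span_singleton] at h
  obtain ⟨u, hu⟩ := h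
  have h1 := congrArg Zsqrtd.re hu
  have h2 := congrArg Zsqrtd.im hu
  rcases gauss_unit u u.isUnit with h | h | h | h <;> rw [h] at h1 h2 <;> simp at h1 h2 <;>
    simp <;> omega

lemma toNZ_surj : Function.Surjective toNZ := by
  rintro ⟨I, hI⟩
  obtain ⟨z, rfl⟩ := (IsPrincipalIdealRing.principal I).principal
  rw [Ideal.submodule_span_eq] at hI
  have hz : z ≠ 0 := by rintro rfl; simp at hI
  have key : ∀ (u : GaussianInt) (_ : IsUnit u), 0 < (z * u).re → 0 ≤ (z * u).im →
      ∃ a, toNZ a = ⟨Ideal.span {z}, hI⟩ := by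
    intro u hu h1 h2
    refine ⟨((z * u).re.toNat - 1, (z * u).im.toNat), ?_⟩
    apply Subtype.ext
    simp only [toNZ]
    rw [Ideal.span_singleton_eq_span_singleton]
    have : (⟨(((z * u).re.toNat - 1 : ℕ) : ℤ) + 1, (((z * u).im.toNat : ℕ) : ℤ)⟩ : GaussianInt) = z * u := by
      ext <;> simp only <;> omega
    rw [this]
    exact (associated_mul_unit_right z u hu).symm
  have hu : ∀ u : GaussianInt, u.norm = 1 → IsUnit u := fun u h =>
    (Zsqrtd.norm_eq_one_iff' (by norm_num) u).mp h
  obtain ⟨a, b⟩ := z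
  have hab : ¬ (a = 0 ∧ b = 0) := by
    rintro ⟨rfl, rfl⟩; exact hz rfl
  have : (0 < a ∧ 0 ≤ b) ∨ (a ≤ 0 ∧ 0 < b) ∨ (a < 0 ∧ b ≤ 0) ∨ (0 ≤ a ∧ b < 0) := by omega
  rcases this with h | h | h | h
  · exact key ⟨1, 0⟩ (hu _ (by simp [Zsqrtd.norm_def])) (by simp; omega) (by simp; omega)
  · exact key ⟨0, -1⟩ (hu _ (by simp [Zsqrtd.norm_def])) (by simp; omega) (by simp; omega)
  · exact key ⟨-1, 0⟩ (hu _ (by simp [Zsqrtd.norm_def])) (by simp; omega) (by simp; omega)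
  · exact key ⟨0, 1⟩ (hu _ (by simp [Zsqrtd.norm_def])) (by simp; omega) (by simp; omega)

def eNZ : ℕ × ℕ ≃ NZ := Equiv.ofBijective toNZ ⟨toNZ_inj, toNZ_surj⟩

lemma normI_eNZ (p : ℕ × ℕ) : normI (eNZ p).1 = nu p := normI_toNZ p

/-- pairs with norm at most x -/
def FP (x : ℝ) : Finset (ℕ × ℕ) :=
  (Finset.range (⌊x⌋₊ + 1) ×ˢ Finset.range (⌊x⌋₊ + 1)).filter (fun p => (nu p : ℝ) ≤ x)

lemma mem_FP {x : ℝ} {p : ℕ × ℕ} : p ∈ FP x ↔ (nu p : ℝ) ≤ x := by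
  simp only [FP, Finset.mem_filter, Finset.mem_product, Finset.mem_range, and_iff_right_iff_imp]
  intro h
  have h1 := Nat.le_floor h
  simp only [nu] at h1
  constructor <;> nlinarith

def FI (x : ℝ) : Finset NZ := (FP x).map eNZ.toEmbedding

lemma mem_FI {x : ℝ} {I : NZ} : I ∈ FI x ↔ (normI I.1 : ℝ) ≤ x := by
  obtain ⟨p, rfl⟩ := eNZ.surjective I
  simp [FI, mem_FP, normI_eNZ]

def qI (I G : Ideal GaussianInt) : Ideal GaussianInt :=
  open Classical in if h : G ∣ I then h.choose else ⊥

lemma qI_spec {I G : Ideal GaussianInt} (h : I ≤ G) : G * qI I G = I := by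
  have h' : G ∣ I := Ideal.dvd_iff_le.mpr h
  rw [qI, dif_pos h']
  exact h'.choose_spec.symm

lemma qI_eq {I G K : Ideal GaussianInt} (hG : G ≠ ⊥) (h : I = G * K) : qI I G = K := by
  have h2 : G * qI I G = I := qI_spec (by rw [h]; exact Ideal.mul_le_left)
  exact mul_left_cancel₀ (by simpa using hG) (h2.trans h)

end

noncomputable section

def supNZ (I J : NZ) : NZ := ⟨I.1 ⊔ J.1, fun h => I.2 (le_bot_iff.mp ((le_sup_left : I.1 ≤ I.1 ⊔ J.1).trans h.le))⟩

lemma mulE_ne {I J : Ideal GaussianInt} (hI : I ≠ ⊥) (hJ : J ≠ ⊥) : I * J ≠ ⊥ := by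
  rw [← Ideal.zero_eq_bot] at *
  exact mul_ne_zero hI hJ

def quNZ (E I G : NZ) (h : I.1 ≤ G.1) : NZ := ⟨qI (E.1 * I.1) G.1, fun h0 => by
  have := qI_spec (I := E.1 * I.1) (G := G.1) (Ideal.mul_le_right.trans h)
  rw [h0, Ideal.mul_bot] at this
  exact mulE_ne E.2 I.2 this.symm⟩

lemma quNZ_spec (E I G : NZ) (h : I.1 ≤ G.1) : G.1 * (quNZ E I G h).1 = E.1 * I.1 :=
  qI_spec (Ideal.mul_le_right.trans h)

abbrev Tri : Type := (_ : NZ) × (NZ × NZ)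

def triMap (t : Tri) : Tri :=
  ⟨supNZ t.2.1 t.2.2, (quNZ t.1 t.2.1 (supNZ t.2.1 t.2.2) le_sup_left,
    quNZ t.1 t.2.2 (supNZ t.2.1 t.2.2) le_sup_right)⟩

lemma triMap_sup (t : Tri) : supNZ (triMap t).2.1 (triMap t).2.2 = t.1 := by
  obtain ⟨E, I, J⟩ := t
  apply Subtype.ext
  have h1 := quNZ_spec E I (supNZ I J) le_sup_left
  have h2 := quNZ_spec E J (supNZ I J) le_sup_right
  have hG := (supNZ I J).2
  apply mul_left_cancel₀ (a := (supNZ I J).1) (by simpa using hG)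
  simp only [supNZ, triMap] at *
  rw [Ideal.mul_sup, h1, h2, ← Ideal.mul_sup, mul_comm]

lemma triMap_invol (t : Tri) : triMap (triMap t) = t := by
  have h0 := triMap_sup t
  obtain ⟨E, I, J⟩ := t
  have h1 := quNZ_spec E I (supNZ I J) le_sup_left
  have h2 := quNZ_spec E J (supNZ I J) le_sup_right
  have e1 := quNZ_spec (triMap ⟨E, I, J⟩).1 (triMap ⟨E, I, J⟩).2.1
    (supNZ (triMap ⟨E, I, J⟩).2.1 (triMap ⟨E, I, J⟩).2.2)
    (le_sup_left : (triMap ⟨E, I, J⟩).2.1.1 ≤ (supNZ (triMap ⟨E, I, J⟩).2.1 (triMap ⟨E, I, J⟩).2.2).1)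
  have e2 := quNZ_spec (triMap ⟨E, I, J⟩).1 (triMap ⟨E, I, J⟩).2.2
    (supNZ (triMap ⟨E, I, J⟩).2.1 (triMap ⟨E, I, J⟩).2.2)
    (le_sup_right : (triMap ⟨E, I, J⟩).2.2.1 ≤ (supNZ (triMap ⟨E, I, J⟩).2.1 (triMap ⟨E, I, J⟩).2.2).1)
  have f1 : (triMap ⟨E, I, J⟩).1.1 * (triMap ⟨E, I, J⟩).2.1.1 = E.1 * I.1 := h1
  have f2 : (triMap ⟨E, I, J⟩).1.1 * (triMap ⟨E, I, J⟩).2.2.1 = E.1 * J.1 := h2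
  rw [f1] at e1
  rw [f2] at e2
  have hE : E.1 ≠ 0 := by simpa using E.2
  have g : (supNZ (triMap ⟨E, I, J⟩).2.1 (triMap ⟨E, I, J⟩).2.2).1 = E.1 := congrArg Subtype.val h0
  have k1 : (triMap (triMap ⟨E, I, J⟩)).2.1 = I := by
    apply Subtype.ext
    apply mul_left_cancel₀ hE
    rw [← e1, g]; rfl
  have k2 : (triMap (triMap ⟨E, I, J⟩)).2.2 = J := by
    apply Subtype.ext
    apply mul_left_cancel₀ hE
    rw [← e2, g]; rfl
  have k0 : (triMap (triMap ⟨E, I, J⟩)).1 = E := h0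
  exact Sigma.ext k0 (heq_of_eq (Prod.ext k1 k2))

def QT (x : ℝ) : Finset Tri :=
  (FI x).sigma (fun E => FI (x / normI E.1) ×ˢ FI (x / normI E.1))

lemma mem_QT {x : ℝ} {t : Tri} : t ∈ QT x ↔
    (normI (t.1.1 * t.2.1.1) : ℝ) ≤ x ∧ (normI (t.1.1 * t.2.2.1) : ℝ) ≤ x := by
  obtain ⟨E, I, J⟩ := t
  have hE : (1:ℝ) ≤ normI E.1 := by exact_mod_cast normI_pos E.2
  have hI : (1:ℝ) ≤ normI I.1 := by exact_mod_cast normI_pos I.2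
  simp only [QT, Finset.mem_sigma, Finset.mem_product, mem_FI, normI_mul, Nat.cast_mul]
  rw [le_div_iff₀ (by linarith), le_div_iff₀ (by linarith)]
  constructor
  · rintro ⟨_, h1, h2⟩
    constructor <;> linarith
  · rintro ⟨h1, h2⟩
    refine ⟨?_, ?_, ?_⟩ <;> nlinarith

/-- gcd sum -/
def SS (x : ℝ) : ℝ := ∑ p ∈ FI x ×ˢ FI x, (normI (supNZ p.1 p.2).1 : ℝ)

lemma key_identity (x : ℝ) :
    ∑ E ∈ FI x, (normI E.1 : ℝ) * ((FI (x / normI E.1)).card : ℝ) ^ 2 =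
    ∑ D ∈ FI x, SS (x / normI D.1) := by
  have h1 : ∑ E ∈ FI x, (normI E.1 : ℝ) * ((FI (x / normI E.1)).card : ℝ) ^ 2 =
      ∑ t ∈ QT x, (normI t.1.1 : ℝ) := by
    rw [QT, Finset.sum_sigma]
    apply Finset.sum_congr rfl
    intro E _
    simp [Finset.card_product]
    ring
  have h2 : ∑ D ∈ FI x, SS (x / normI D.1) = 
      ∑ t ∈ QT x, (normI (supNZ t.2.1 t.2.2).1 : ℝ) := by
    rw [QT, Finset.sum_sigma]
    rfl
  rw [h1, h2]
  have hm : ∀ t ∈ QT x, triMap t ∈ QT x := by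
    intro t ht
    rw [mem_QT] at ht ⊢
    have h1 := quNZ_spec t.1 t.2.1 (supNZ t.2.1 t.2.2) le_sup_left
    have h2 := quNZ_spec t.1 t.2.2 (supNZ t.2.1 t.2.2) le_sup_right
    have f1 : (triMap t).1.1 * (triMap t).2.1.1 = t.1.1 * t.2.1.1 := h1
    have f2 : (triMap t).1.1 * (triMap t).2.2.1 = t.1.1 * t.2.2.1 := h2
    rwa [f1, f2]
  refine Finset.sum_nbij' triMap triMap hm hm (fun t _ => triMap_invol t)
    (fun t _ => triMap_invol t) ?_
  intro t _
  rw [triMap_sup]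

lemma tsum_P (x : ℝ) : (∑' p : P x, (normI (p.1.1 ⊔ p.1.2) : ℝ)) = SS x ∧
    ((P x).ncard : ℝ) = ((FI x).card : ℝ) ^ 2 := by
  classical
  let f : NZ × NZ ↪ Ideal GaussianInt × Ideal GaussianInt :=
    (Function.Embedding.subtype _).prodMap (Function.Embedding.subtype _)
  have hP : P x = ((FI x ×ˢ FI x).map f : Finset _) := by
    ext ⟨I, J⟩
    simp only [P, Set.mem_ofPred_eq, Finset.coe_map, Set.mem_image, Finset.mem_coe, Finset.mem_product, mem_FI]
    constructor
    · rintro ⟨h1, h2, h3, h4⟩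
      exact ⟨(⟨I, h1⟩, ⟨J, h2⟩), ⟨h3, h4⟩, rfl⟩
    · rintro ⟨⟨I', J'⟩, ⟨h1, h2⟩, h3⟩
      have e1 : I'.1 = I := congrArg Prod.fst h3
      have e2 : J'.1 = J := congrArg Prod.snd h3
      subst e1; subst e2
      exact ⟨I'.2, J'.2, h1, h2⟩
  rw [hP]
  constructor
  · rw [Finset.tsum_subtype' ((FI x ×ˢ FI x).map f) (fun p : Ideal GaussianInt × Ideal GaussianInt => (normI (p.1 ⊔ p.2) : ℝ)), Finset.sum_map]
    rfl
  · rw [Set.ncard_coe_finset, Finset.card_map, Finset.card_product]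
    push_cast; ring

end

noncomputable section

lemma integral_quarter (R : ℝ) (hR : 0 < R) :
    ∫ t in (0:ℝ)..R, √(R ^ 2 - t ^ 2) = π / 4 * R ^ 2 := by
  have h0 : ∫ t in (0:ℝ)..1, √(1 - t ^ 2) = π / 4 := by
    have h1 := integral_sqrt_one_sub_sq
    have hc : Continuous (fun t : ℝ => √(1 - t ^ 2)) := by fun_prop
    rw [← intervalIntegral.integral_add_adjacent_intervals (b := 0)
      (hc.intervalIntegrable _ _) (hc.intervalIntegrable _ _)] at h1
    have h2 := intervalIntegral.integral_comp_neg (a := 0) (b := 1) (fun t : ℝ => √(1 - t ^ 2))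
    simp only [neg_sq, neg_zero] at h2
    rw [← h2] at h1
    linarith
  have h := intervalIntegral.integral_comp_mul_left (a := 0) (b := 1)
    (fun t : ℝ => √(R ^ 2 - t ^ 2)) hR.ne'
  have h2 : ∀ t : ℝ, √(R ^ 2 - (R * t) ^ 2) = R * √(1 - t ^ 2) := by
    intro t
    rw [show R ^ 2 - (R * t) ^ 2 = R ^ 2 * (1 - t ^ 2) by ring, Real.sqrt_mul (by positivity),
      Real.sqrt_sq hR.le]
  simp only [h2, mul_zero, mul_one, intervalIntegral.integral_const_mul, h0, smul_eq_mul] at h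
  field_simp at h
  linarith

lemma integral_quarter' (x : ℝ) (hx : 0 < x) (n : ℕ) (hn : √x ≤ n) :
    ∫ t in (0:ℝ)..n, √(x - t ^ 2) = π / 4 * x := by
  have hc : Continuous (fun t : ℝ => √(x - t ^ 2)) := by fun_prop
  rw [← intervalIntegral.integral_add_adjacent_intervals (b := √x)
      (hc.intervalIntegrable _ _) (hc.intervalIntegrable _ _)]
  have h1 := integral_quarter (√x) (Real.sqrt_pos.mpr hx)
  rw [Real.sq_sqrt hx.le] at h1
  rw [h1]
  have h2 : ∫ t in (√x)..n, √(x - t ^ 2) = ∫ t in (√x)..n, (0:ℝ) := by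
    apply intervalIntegral.integral_congr
    intro t ht
    rw [Set.uIcc_of_le hn] at ht
    apply Real.sqrt_eq_zero_of_nonpos
    have := Real.sqrt_le_iff.mp ht.1
    linarith [this.2]
  rw [h2]; simp

lemma sqrt_le_nat_of {x : ℝ} (hx : 0 ≤ x) {a : ℕ} {p : ℕ} (h : (((a:ℕ) : ℝ)) ^ 2 + (p:ℝ) ^ 2 ≤ x) :
    (a : ℝ) ≤ √x ∧ (p : ℝ) ≤ √x := by
  constructor <;> apply Real.le_sqrt_of_sq_le <;> nlinarith [sq_nonneg (a:ℝ), sq_nonneg (p:ℝ)]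

lemma nu_cast (p : ℕ × ℕ) : (nu p : ℝ) = ((p.1 : ℝ) + 1) ^ 2 + (p.2 : ℝ) ^ 2 := by
  simp [nu]

lemma fiber_card (x : ℝ) (a : ℕ) :
    |(((FP x).filter (fun p => p.1 = a)).card : ℝ) - √(x - ((a + 1 : ℕ) : ℝ) ^ 2)| ≤ 1 := by
  by_cases h : ((a + 1 : ℕ) : ℝ) ^ 2 ≤ x
  · have he : (FP x).filter (fun p => p.1 = a) =
        (Finset.range (⌊√(x - ((a + 1 : ℕ) : ℝ) ^ 2)⌋₊ + 1)).map
          ⟨fun b => (a, b), fun b c h => (Prod.mk.inj h).2⟩ := by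
      ext ⟨a', b⟩
      simp only [Finset.mem_filter, mem_FP, Finset.mem_map, Finset.mem_range, Nat.lt_add_one_iff, nu_cast]
      rw [and_comm]
      constructor
      · rintro ⟨rfl, h2⟩
        refine ⟨b, ?_, rfl⟩
        apply Nat.le_floor
        apply Real.le_sqrt_of_sq_le
        push_cast; linarith
      · rintro ⟨b', h2, h3⟩
        obtain ⟨rfl, rfl⟩ := Prod.mk.inj h3
        refine ⟨rfl, ?_⟩
        have := (Nat.le_floor_iff (Real.sqrt_nonneg _)).mp h2
        rw [Real.le_sqrt (by positivity)  (by linarith)] at this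
        push_cast at this; linarith
    rw [he, Finset.card_map, Finset.card_range, abs_le]
    have h1 := Nat.floor_le (Real.sqrt_nonneg (x - ((a + 1 : ℕ) : ℝ) ^ 2))
    have h2 := Nat.lt_floor_add_one (√(x - ((a + 1 : ℕ) : ℝ) ^ 2))
    rw [Nat.cast_add_one]
    constructor <;> linarith
  · have he : (FP x).filter (fun p => p.1 = a) = ∅ := by
      rw [Finset.filter_eq_empty_iff]
      rintro ⟨a', b⟩ hp rfl
      rw [mem_FP, nu_cast] at hp
      apply h
      push_cast
      simp only at hp
      nlinarith [sq_nonneg (b:ℝ)]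
    rw [he, Real.sqrt_eq_zero_of_nonpos (by linarith)]
    simp

lemma L1 (x : ℝ) (hx : 1 ≤ x) : |((FP x).card : ℝ) - π / 4 * x| ≤ 4 * √x := by
  set n := ⌈√x⌉₊ with hn
  have hn1 : √x ≤ n := Nat.le_ceil _
  have hn2 : (n:ℝ) < √x + 1 := Nat.ceil_lt_add_one (Real.sqrt_nonneg _)
  have hs1 : 1 ≤ √x := Real.one_le_sqrt.mpr hx
  have hcard : ((FP x).card : ℝ) =
      ∑ a ∈ Finset.range n, (((FP x).filter (fun p => p.1 = a)).card : ℝ) := by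
    rw [← Nat.cast_sum, Finset.card_eq_sum_card_fiberwise (f := Prod.fst) (t := Finset.range n)]
    intro p hp
    have hp := mem_FP.mp (Finset.mem_coe.mp hp)
    rw [nu_cast] at hp
    have := (sqrt_le_nat_of (x := x) (by linarith) (a := p.1 + 1) (p := p.2) (by push_cast; exact hp)).1
    have : ((p.1 + 1 : ℕ) : ℝ) ≤ n := this.trans hn1
    have : p.1 + 1 ≤ n := by exact_mod_cast this
    simp; omega
  have h1 : |((FP x).card : ℝ) - ∑ a ∈ Finset.range n, √(x - ((a + 1 : ℕ) : ℝ) ^ 2)| ≤ n := by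
    rw [hcard, ← Finset.sum_sub_distrib]
    refine (Finset.abs_sum_le_sum_abs _ _).trans ?_
    refine (Finset.sum_le_sum (fun a _ => fiber_card x a)).trans ?_
    simp
  have hanti : AntitoneOn (fun t : ℝ => √(x - t ^ 2)) (Set.Icc 0 (0 + (n:ℝ))) := by
    intro s hs t ht hst
    apply Real.sqrt_le_sqrt
    nlinarith [hs.1]
  have h2 := hanti.sum_le_integral
  have h3 := hanti.integral_le_sum
  simp only [zero_add] at h2 h3
  rw [integral_quarter' x (by linarith) n hn1] at h2 h3
  have h4 := Finset.sum_range_succ (fun a : ℕ => √(x - (a : ℝ) ^ 2)) n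
  rw [Finset.sum_range_succ'] at h4
  have h5 : √(x - ((0:ℕ):ℝ) ^ 2) = √x := by simp
  rw [h5] at h4
  have h6 := Real.sqrt_nonneg (x - (n:ℝ) ^ 2)
  rw [abs_le] at h1 ⊢
  constructor <;> linarith

lemma nu_lower (p : ℕ × ℕ) : ((p.1:ℝ) + 1) * ((p.2:ℝ) + 1) ≤ 2 * nu p := by
  rw [nu_cast]
  have h1 : (0:ℝ) ≤ p.1 := by positivity
  have h2 : (0:ℝ) ≤ p.2 := by positivity
  nlinarith [sq_nonneg ((p.1:ℝ) + 1 - p.2)]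

lemma nu_pos (p : ℕ × ℕ) : (1:ℝ) ≤ nu p := by
  rw [nu_cast]
  have h1 : (0:ℝ) ≤ p.1 := by positivity
  nlinarith [sq_nonneg (p.2:ℝ)]

lemma sum_inv_sqrt (r : ℕ) : ∑ a ∈ Finset.range r, 1 / √((a:ℝ) + 1) ≤ 2 * √r := by
  induction r with
  | zero => simp
  | succ r ih =>
    rw [Finset.sum_range_succ]
    have h1 : 0 < √((r:ℝ) + 1) := Real.sqrt_pos.mpr (by positivity)
    have h2 := Real.sqrt_nonneg (r:ℝ)
    have h3 := Real.sq_sqrt (show (0:ℝ) ≤ (r:ℝ) + 1 by positivity)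
    have h4 := Real.sq_sqrt (show (0:ℝ) ≤ (r:ℝ) by positivity)
    have : 1 / √((r:ℝ) + 1) ≤ 2 * √((r:ℝ) + 1) - 2 * √r := by
      rw [div_le_iff₀ h1]
      nlinarith [sq_nonneg (√((r:ℝ) + 1) - √r)]
    push_cast
    linarith

lemma L3 (x : ℝ) (hx : 1 ≤ x) : ∑ p ∈ FP x, 1 / √(nu p : ℝ) ≤ 16 * √x := by
  set r := ⌊√x⌋₊ + 1 with hr
  have hs1 : 1 ≤ √x := Real.one_le_sqrt.mpr hx
  have hr1 : (r:ℝ) ≤ √x + 1 := by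
    rw [hr]; push_cast
    linarith [Nat.floor_le (Real.sqrt_nonneg x)]
  have hsub : FP x ⊆ Finset.range r ×ˢ Finset.range r := by
    intro p hp
    have hp := mem_FP.mp hp
    rw [nu_cast] at hp
    have := (sqrt_le_nat_of (x := x) (by linarith) (a := p.1 + 1) (p := p.2) (by push_cast; exact hp))
    have h1 := Nat.le_floor this.1
    have h2 := Nat.le_floor this.2
    simp; omega
  calc ∑ p ∈ FP x, 1 / √(nu p : ℝ) ≤ ∑ p ∈ FP x, 2 * (1 / √((p.1:ℝ) + 1) * (1 / √((p.2:ℝ) + 1))) := by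
        apply Finset.sum_le_sum
        intro p _
        have h := nu_lower p
        have h1 : (0:ℝ) < √((p.1:ℝ) + 1) := Real.sqrt_pos.mpr (by positivity)
        have h2 : (0:ℝ) < √((p.2:ℝ) + 1) := Real.sqrt_pos.mpr (by positivity)
        have h3 : √((p.1:ℝ) + 1) * √((p.2:ℝ) + 1) ≤ 2 * √(nu p : ℝ) := by
          rw [← Real.sqrt_mul (by positivity), show (2:ℝ) = √4 by
            rw [show (4:ℝ) = 2 ^ 2 by norm_num]; simp, ← Real.sqrt_mul (by positivity)]
          apply Real.sqrt_le_sqrt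
          have := nu_pos p
          linarith
        have h4 : 0 < √(nu p : ℝ) := Real.sqrt_pos.mpr (by linarith [nu_pos p])
        rw [one_div_mul_one_div, mul_one_div, div_le_div_iff₀ h4 (by positivity)]
        linarith
    _ ≤ ∑ p ∈ Finset.range r ×ˢ Finset.range r, 2 * (1 / √((p.1:ℝ) + 1) * (1 / √((p.2:ℝ) + 1))) := by
        apply Finset.sum_le_sum_of_subset_of_nonneg hsub
        intros; positivity
    _ = 2 * ((∑ a ∈ Finset.range r, 1 / √((a:ℝ) + 1)) * (∑ a ∈ Finset.range r, 1 / √((a:ℝ) + 1))) := by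
        rw [← Finset.mul_sum, Finset.sum_mul_sum, Finset.sum_product]
    _ ≤ 2 * ((2 * √r) * (2 * √r)) := by
        have := sum_inv_sqrt r
        have : 0 ≤ ∑ a ∈ Finset.range r, 1 / √((a:ℝ) + 1) := by positivity
        gcongr
    _ = 8 * r := by
        have := Real.mul_self_sqrt (show (0:ℝ) ≤ r by positivity)
        linear_combination 8 * this
    _ ≤ 16 * √x := by linarith

end

noncomputable section

lemma FP_sum_succ (g : ℕ → ℝ) (m : ℕ) :
    ∑ p ∈ FP ((m + 1 : ℕ) : ℝ), g (nu p) =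
      ∑ p ∈ FP (m : ℝ), g (nu p) + g (m + 1) * (((FP ((m + 1 : ℕ) : ℝ)).card : ℝ) - (FP (m : ℝ)).card) := by
  classical
  have hsub : FP (m : ℝ) ⊆ FP ((m + 1 : ℕ) : ℝ) := by
    intro p hp
    rw [mem_FP] at *
    push_cast; linarith
  have h1 := Finset.sum_sdiff (f := fun p => g (nu p)) hsub
  have h2 : ∑ p ∈ FP ((m + 1 : ℕ) : ℝ) \ FP (m : ℝ), g (nu p) =
      ∑ p ∈ FP ((m + 1 : ℕ) : ℝ) \ FP (m : ℝ), g (m + 1) := by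
    apply Finset.sum_congr rfl
    intro p hp
    rw [Finset.mem_sdiff, mem_FP, mem_FP, Nat.cast_le, Nat.cast_le] at hp
    congr 1; omega
  rw [← h1, h2, Finset.sum_const, Finset.card_sdiff_of_subset hsub,
    nsmul_eq_mul, Nat.cast_sub (Finset.card_le_card hsub)]
  ring

lemma FP_zero : FP ((0:ℕ):ℝ) = ∅ := by
  ext p
  simp only [mem_FP, Finset.notMem_empty, iff_false, not_le]
  push_cast
  linarith [nu_pos p]

lemma H_formula (m : ℕ) : ∑ p ∈ FP (m : ℝ), 1 / (nu p : ℝ) =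
    ((FP (m:ℝ)).card : ℝ) / (m + 1) +
      ∑ n ∈ Finset.range m, ((FP ((n + 1 : ℕ) : ℝ)).card : ℝ) / (((n:ℝ) + 1) * (n + 2)) := by
  induction m with
  | zero => rw [FP_zero]; simp
  | succ m ih =>
    rw [FP_sum_succ (fun n => 1 / (n:ℝ)), ih, Finset.sum_range_succ]
    have h1 : (m:ℝ) + 1 ≠ 0 := by positivity
    have h2 : (m:ℝ) + 2 ≠ 0 := by positivity
    have h3 : ((m + 1 : ℕ) : ℝ) + 1 = m + 2 := by push_cast; ring
    rw [h3]
    push_cast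
    field_simp
    ring

lemma summable_32 : Summable (fun n : ℕ => 1 / (((n:ℝ) + 1) * √((n:ℝ) + 1))) := by
  have h := (summable_nat_add_iff 1).mpr (Real.summable_one_div_nat_rpow.mpr (show (1:ℝ) < 3/2 by norm_num))
  refine h.congr ?_
  intro n
  have : (0:ℝ) < (n:ℝ) + 1 := by positivity
  push_cast
  rw [show (3/2:ℝ) = 1 + 1/2 by norm_num, Real.rpow_add this, Real.rpow_one, ← Real.sqrt_eq_rpow]

lemma harm_bound (m : ℕ) : |∑ n ∈ Finset.range m, 1 / ((n:ℝ) + 2) - Real.log (m + 1)| ≤ 1 := by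
  have h1 := log_add_one_le_harmonic (m + 1)
  have h2 := harmonic_le_one_add_log (m + 1)
  have h3 : ((harmonic (m + 1) : ℚ) : ℝ) = ∑ n ∈ Finset.range m, 1 / ((n:ℝ) + 2) + 1 := by
    rw [harmonic, Finset.sum_range_succ']
    push_cast
    congr 1
    · apply Finset.sum_congr rfl
      intro n _
      rw [one_div]; congr 1; ring
    · norm_num
  rw [h3] at h1 h2
  have h4 : Real.log (m + 1) ≤ Real.log (((m + 1 : ℕ) : ℝ) + 1) := by
    apply Real.log_le_log (by positivity); push_cast; linarith
  push_cast at h2 h4 h1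
  rw [abs_le]; constructor <;> linarith

lemma L2_nat : ∃ K : ℝ, 0 ≤ K ∧ ∀ m : ℕ, 1 ≤ m →
    |∑ p ∈ FP (m : ℝ), 1 / (nu p : ℝ) - π / 4 * Real.log (m + 1)| ≤ K := by
  set W := ∑' n : ℕ, 1 / (((n:ℝ) + 1) * √((n:ℝ) + 1)) with hS
  have hS0 : 0 ≤ W := tsum_nonneg (fun n => by positivity)
  refine ⟨π / 4 + 4 + 4 * W + π / 4, by positivity, ?_⟩
  intro m hm
  have hm1 : (1:ℝ) ≤ m := by exact_mod_cast hm
  rw [H_formula]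
  have a1 : |((FP (m:ℝ)).card : ℝ) / (m + 1)| ≤ π / 4 + 4 := by
    have h := (abs_le.mp (L1 m hm1)).2
    have hs : √(m:ℝ) ≤ m := Real.sqrt_le_iff.mpr ⟨by linarith, by nlinarith⟩
    rw [abs_of_nonneg (by positivity), div_le_iff₀ (by positivity)]
    nlinarith [Real.pi_pos]
  have a2 : |∑ n ∈ Finset.range m, ((FP ((n + 1 : ℕ) : ℝ)).card : ℝ) / (((n:ℝ) + 1) * (n + 2)) -
      π / 4 * ∑ n ∈ Finset.range m, 1 / ((n:ℝ) + 2)| ≤ 4 * W := by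
    rw [Finset.mul_sum, ← Finset.sum_sub_distrib]
    refine (Finset.abs_sum_le_sum_abs _ _).trans ?_
    have : ∀ n ∈ Finset.range m, |((FP ((n + 1 : ℕ) : ℝ)).card : ℝ) / (((n:ℝ) + 1) * (n + 2)) -
        π / 4 * (1 / ((n:ℝ) + 2))| ≤ 4 * (1 / (((n:ℝ) + 1) * √((n:ℝ) + 1))) := by
      intro n _
      have hn : (0:ℝ) < (n:ℝ) + 1 := by positivity
      have hn2 : (0:ℝ) < (n:ℝ) + 2 := by positivity
      have hsq : 0 < √((n:ℝ) + 1) := Real.sqrt_pos.mpr hn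
      have h := L1 ((n + 1 : ℕ) : ℝ) (by push_cast; linarith)
      have e : ((FP ((n + 1 : ℕ) : ℝ)).card : ℝ) / (((n:ℝ) + 1) * (n + 2)) - π / 4 * (1 / ((n:ℝ) + 2))
          = (((FP ((n + 1 : ℕ) : ℝ)).card : ℝ) - π / 4 * ((n + 1 : ℕ) : ℝ)) / (((n:ℝ) + 1) * (n + 2)) := by
        push_cast; field_simp
      rw [e, abs_div, abs_of_pos (show 0 < ((n:ℝ) + 1) * (n + 2) by positivity)]
      have h' : ((n + 1 : ℕ) : ℝ) = (n:ℝ) + 1 := by push_cast; ring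
      calc _ ≤ 4 * √((n + 1 : ℕ) : ℝ) / (((n:ℝ) + 1) * (n + 2)) := by gcongr
        _ ≤ 4 * (1 / (((n:ℝ) + 1) * √((n:ℝ) + 1))) := by
          rw [h', mul_one_div, div_le_div_iff₀ (by positivity) (by positivity)]
          have := Real.mul_self_sqrt hn.le
          nlinarith
    refine (Finset.sum_le_sum this).trans ?_
    rw [← Finset.mul_sum]
    gcongr
    exact summable_32.sum_le_tsum _ (fun n _ => by positivity)
  have a3 := harm_bound m
  have a4 : |π / 4 * ∑ n ∈ Finset.range m, 1 / ((n:ℝ) + 2) - π / 4 * Real.log (m + 1)| ≤ π / 4 := by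
    rw [← mul_sub, abs_mul, abs_of_pos (by positivity)]
    have : 0 < π / 4 := by positivity
    nlinarith
  rw [abs_le] at *
  constructor <;> linarith [a1.1, a1.2, a2.1, a2.2, a4.1, a4.2]

lemma FP_floor (x : ℝ) (hx : 0 ≤ x) : FP x = FP (⌊x⌋₊ : ℝ) := by
  ext p
  rw [mem_FP, mem_FP, Nat.cast_le, Nat.le_floor_iff hx]

lemma L2 : ∃ K : ℝ, 0 ≤ K ∧ ∀ x : ℝ, 1 ≤ x →
    |∑ p ∈ FP x, 1 / (nu p : ℝ) - π / 4 * Real.log x| ≤ K := by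
  obtain ⟨K, hK, h⟩ := L2_nat
  refine ⟨K + π / 4, by positivity, ?_⟩
  intro x hx
  have h1 := h ⌊x⌋₊ (Nat.le_floor (by simpa using hx))
  rw [← FP_floor x (by linarith)] at h1
  have h2 := Nat.floor_le (show 0 ≤ x by linarith)
  have h3 := Nat.lt_floor_add_one x
  have h4 : Real.log x ≤ Real.log (⌊x⌋₊ + 1) := Real.log_le_log (by linarith) h3.le
  have h5 : Real.log (⌊x⌋₊ + 1) ≤ Real.log x + 1 := by
    have : Real.log (⌊x⌋₊ + 1) ≤ Real.log (x * 2) := Real.log_le_log (by positivity) (by linarith)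
    rw [Real.log_mul (by linarith) (by norm_num)] at this
    linarith [Real.log_two_lt_d9]
  have : 0 < π / 4 := by positivity
  rw [abs_le] at *
  constructor <;> nlinarith

lemma summable_nu32 : Summable (fun p : ℕ × ℕ => 1 / ((nu p : ℝ) * √(nu p : ℝ))) := by
  have h := (summable_32.mul_of_nonneg summable_32 (fun n => by positivity) (fun n => by positivity)).mul_left 4
  refine Summable.of_nonneg_of_le (fun p => by positivity) ?_ h
  intro p
  have h := nu_lower p
  have h1 : (0:ℝ) < √((p.1:ℝ) + 1) := Real.sqrt_pos.mpr (by positivity)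
  have h2 : (0:ℝ) < √((p.2:ℝ) + 1) := Real.sqrt_pos.mpr (by positivity)
  have hp := nu_pos p
  have h3 : √((p.1:ℝ) + 1) * √((p.2:ℝ) + 1) ≤ 2 * √(nu p : ℝ) := by
    rw [← Real.sqrt_mul (by positivity), show (2:ℝ) = √4 by
      rw [show (4:ℝ) = 2 ^ 2 by norm_num]; simp, ← Real.sqrt_mul (by positivity)]
    apply Real.sqrt_le_sqrt
    linarith
  have h4 : 0 < √(nu p : ℝ) := Real.sqrt_pos.mpr (by linarith [nu_pos p])
  have h5 := mul_le_mul h h3 (by positivity) (by positivity)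
  rw [one_div_mul_one_div, mul_one_div, div_le_div_iff₀ (by positivity) (by positivity)]
  linarith

lemma summable_nu2 : Summable (fun p : ℕ × ℕ => 1 / (nu p : ℝ) ^ 2) := by
  refine Summable.of_nonneg_of_le (fun p => by positivity) ?_ summable_nu32
  intro p
  have hp := nu_pos p
  have hs : √(nu p : ℝ) ≤ nu p := Real.sqrt_le_iff.mpr ⟨by linarith, by nlinarith⟩
  have h4 : 0 < √(nu p : ℝ) := Real.sqrt_pos.mpr (by linarith [nu_pos p])
  apply one_div_le_one_div_of_le (by positivity)
  nlinarith

lemma log_le_two_sqrt {y : ℝ} (hy : 0 < y) : Real.log y ≤ 2 * √y := by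
  have h := Real.log_le_sub_one_of_pos (Real.sqrt_pos.mpr hy)
  rw [Real.log_sqrt hy.le] at h
  linarith

lemma log_nu_bound (p : ℕ × ℕ) : Real.log (nu p) / (nu p : ℝ) ^ 2 ≤ 2 * (1 / ((nu p : ℝ) * √(nu p : ℝ))) := by
  have hp := nu_pos p
  have h4 : 0 < √(nu p : ℝ) := Real.sqrt_pos.mpr (by linarith [nu_pos p])
  have h5 := Real.mul_self_sqrt (show (0:ℝ) ≤ nu p by linarith)
  have := log_le_two_sqrt (show (0:ℝ) < nu p by linarith)
  rw [mul_one_div, div_le_div_iff₀ (by positivity) (by positivity)]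
  calc Real.log (nu p) * ((nu p : ℝ) * √(nu p : ℝ)) ≤ (2 * √(nu p : ℝ)) * ((nu p : ℝ) * √(nu p : ℝ)) := by gcongr
    _ = 2 * (nu p : ℝ) ^ 2 := by linear_combination 2 * (nu p : ℝ) * h5

lemma summable_log : Summable (fun p : ℕ × ℕ => Real.log (nu p) / (nu p : ℝ) ^ 2) := by
  refine Summable.of_nonneg_of_le (fun p => ?_) log_nu_bound (summable_nu32.mul_left 2)
  have := Real.log_nonneg (nu_pos p)
  positivity

/-- the zeta value as a lattice sum -/
def ZZ : ℝ := ∑' p : ℕ × ℕ, 1 / (nu p : ℝ) ^ 2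

lemma L4 : ∃ K : ℝ, 0 ≤ K ∧ ∀ x : ℝ, 1 ≤ x →
    |∑ p ∈ FP x, 1 / (nu p : ℝ) ^ 2 - ZZ| * Real.log x ≤ K ∧
    |∑ p ∈ FP x, Real.log (nu p) / (nu p : ℝ) ^ 2| ≤ K := by
  have hnn : ∀ p : ℕ × ℕ, 0 ≤ Real.log (nu p) / (nu p : ℝ) ^ 2 := fun p => by
    have := Real.log_nonneg (nu_pos p)
    positivity
  refine ⟨∑' p : ℕ × ℕ, Real.log (nu p) / (nu p : ℝ) ^ 2, tsum_nonneg hnn, ?_⟩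
  intro x hx
  constructor
  · have h1 := summable_nu2.sum_add_tsum_subtype_compl (FP x)
    have h2 := summable_log.sum_add_tsum_subtype_compl (FP x)
    have h0 : ∑ p ∈ FP x, 1 / (nu p : ℝ) ^ 2 - ZZ =
      - ∑' p : {p // p ∉ FP x}, 1 / (nu p.1 : ℝ) ^ 2 := by
      rw [ZZ, ← h1]; ring
    rw [h0, abs_neg, abs_of_nonneg (tsum_nonneg (fun p => by positivity)), ← tsum_mul_right, ← h2]
    have h3 : 0 ≤ ∑ p ∈ FP x, Real.log (nu p) / (nu p : ℝ) ^ 2 := Finset.sum_nonneg (fun p _ => hnn p)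
    have h4 : ∑' p : {p // p ∉ FP x}, 1 / (nu p.1 : ℝ) ^ 2 * Real.log x ≤
        ∑' p : {p // p ∉ FP x}, Real.log (nu p.1) / (nu p.1 : ℝ) ^ 2 := by
      apply Summable.tsum_le_tsum
      · rintro ⟨p, hp⟩
        rw [mem_FP, not_le] at hp
        have := Real.log_le_log (by linarith) hp.le
        simp only
        rw [one_div_mul_eq_div]
        gcongr
      · exact (summable_nu2.subtype _).mul_right _
      · exact summable_log.subtype _
    exact h4.trans (le_add_of_nonneg_left h3)
  · rw [abs_of_nonneg (Finset.sum_nonneg (fun p _ => hnn p))]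
    exact summable_log.sum_le_tsum _ (fun p _ => hnn p)

lemma ZZ_ge : 1 ≤ ZZ := by
  have := summable_nu2.le_tsum (0, 0) (fun p _ => by positivity)
  simpa [nu, ZZ] using this

lemma ZZ_lt : ZZ < 2 := by
  have h2 : HasSum (fun n : ℕ => 1 / ((n:ℝ) + 1) ^ 2) (π ^ 2 / 6) := by
    have := (hasSum_nat_add_iff' 1).mpr hasSum_zeta_two
    simpa using this
  have h4 : HasSum (fun n : ℕ => 1 / ((n:ℝ) + 1) ^ 4) (π ^ 4 / 90) := by
    have := (hasSum_nat_add_iff' 1).mpr hasSum_zeta_four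
    simpa using this
  have hd : HasSum (fun n : ℕ => if n = 0 then (1:ℝ) else 0) 1 := hasSum_ite_eq 0 1
  have s1 := h4.summable.mul_of_nonneg hd.summable (fun n => by positivity) (fun n => by positivity)
  have s2 := h2.summable.mul_of_nonneg hasSum_zeta_two.summable (fun n => by positivity) (fun n => by positivity)
  have t1 := h4.mul hd s1
  have t2 := (h2.mul hasSum_zeta_two s2).mul_left (1/4)
  have t := t1.add t2
  have : ZZ ≤ π ^ 4 / 90 * 1 + 1 / 4 * (π ^ 2 / 6 * (π ^ 2 / 6)) := by
    rw [← t.tsum_eq]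
    apply Summable.tsum_le_tsum _ summable_nu2 t.summable
    rintro ⟨a, b⟩
    rw [nu_cast]
    by_cases hb : b = 0
    · subst hb
      simp
      apply le_of_eq
      ring
    · have hb' : (0:ℝ) < b := by exact_mod_cast Nat.pos_of_ne_zero hb
      have ha : (0:ℝ) < (a:ℝ) + 1 := by positivity
      simp only [hb, if_false, mul_zero, zero_add]
      rw [one_div_mul_one_div, one_div_mul_one_div]
      apply one_div_le_one_div_of_le (by positivity)
      have h := sq_nonneg ((a:ℝ) + 1 - b)
      have h' : 2 * ((a:ℝ) + 1) * b ≤ ((a:ℝ) + 1) ^ 2 + (b:ℝ) ^ 2 := by nlinarith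
      have := pow_le_pow_left₀ (by positivity) h' 2
      nlinarith
  have hpi : π < 3.15 := Real.pi_lt_d2
  have hpi4 : π ^ 4 < 3.15 ^ 4 := pow_lt_pow_left₀ hpi Real.pi_pos.le (by norm_num)
  norm_num at hpi4
  nlinarith

end

noncomputable section

lemma FI_card (x : ℝ) : (FI x).card = (FP x).card := by rw [FI, Finset.card_map]

lemma key_FP (x : ℝ) :
    ∑ p ∈ FP x, (nu p : ℝ) * ((FP (x / nu p)).card : ℝ) ^ 2 = ∑ p ∈ FP x, SS (x / nu p) := by
  have h := key_identity x
  simp only [FI_card] at h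
  simpa only [FI, Finset.sum_map, Equiv.coe_toEmbedding, normI_eNZ] using h

lemma card_sq (y : ℝ) (hy : 1 ≤ y) :
    |((FP y).card : ℝ) ^ 2 - (π / 4) ^ 2 * y ^ 2| ≤ 24 * (y * √y) := by
  have h := L1 y hy
  have hs1 : 1 ≤ √y := Real.one_le_sqrt.mpr hy
  have hs : √y ≤ y := Real.sqrt_le_iff.mpr ⟨by linarith, by nlinarith⟩
  have hc : π / 4 ≤ 1 := by linarith [Real.pi_lt_four]
  have hc0 : 0 < π / 4 := by positivity
  set e := ((FP y).card : ℝ) - π / 4 * y with he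
  have e1 : ((FP y).card : ℝ) ^ 2 - (π / 4) ^ 2 * y ^ 2 = e * (e + 2 * (π / 4 * y)) := by
    rw [he]; ring
  rw [e1, abs_mul]
  have h2 : |e + 2 * (π / 4 * y)| ≤ 6 * y := by
    rw [abs_le] at *
    constructor <;> nlinarith
  calc |e| * |e + 2 * (π / 4 * y)| ≤ (4 * √y) * (6 * y) := by gcongr
    _ = 24 * (y * √y) := by ring

lemma L5 : ∃ K : ℝ, 0 ≤ K ∧ ∀ x : ℝ, 1 ≤ x →
    |∑ p ∈ FP x, (nu p : ℝ) * ((FP (x / nu p)).card : ℝ) ^ 2 -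
      (π / 4) ^ 3 * (x ^ 2 * Real.log x)| ≤ K * x ^ 2 := by
  obtain ⟨K2, hK2, h2⟩ := L2
  refine ⟨384 + (π / 4) ^ 2 * K2, by positivity, ?_⟩
  intro x hx
  have hx0 : 0 < x := by linarith
  have a1 : |∑ p ∈ FP x, (nu p : ℝ) * ((FP (x / nu p)).card : ℝ) ^ 2 -
      (π / 4) ^ 2 * x ^ 2 * ∑ p ∈ FP x, 1 / (nu p : ℝ)| ≤ 384 * x ^ 2 := by
    rw [Finset.mul_sum, ← Finset.sum_sub_distrib]
    refine (Finset.abs_sum_le_sum_abs _ _).trans ?_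
    have : ∀ p ∈ FP x, |(nu p : ℝ) * ((FP (x / nu p)).card : ℝ) ^ 2 -
        (π / 4) ^ 2 * x ^ 2 * (1 / (nu p : ℝ))| ≤ 24 * (x * √x) * (1 / √(nu p : ℝ)) := by
      intro p hp
      rw [mem_FP] at hp
      have hn := nu_pos p
      have hn0 : (0:ℝ) < nu p := by linarith
      have h := card_sq (x / nu p) (by rw [le_div_iff₀ hn0]; linarith)
      have e : (nu p : ℝ) * ((FP (x / nu p)).card : ℝ) ^ 2 - (π / 4) ^ 2 * x ^ 2 * (1 / (nu p : ℝ))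
          = (nu p : ℝ) * (((FP (x / nu p)).card : ℝ) ^ 2 - (π / 4) ^ 2 * (x / nu p) ^ 2) := by
        field_simp
      rw [e, abs_mul, abs_of_pos hn0]
      calc _ ≤ (nu p : ℝ) * (24 * (x / nu p * √(x / nu p))) := by gcongr
        _ = _ := by
          rw [Real.sqrt_div hx0.le]
          field_simp
    refine (Finset.sum_le_sum this).trans ?_
    rw [← Finset.mul_sum]
    have h3 := L3 x hx
    calc _ ≤ 24 * (x * √x) * (16 * √x) := by gcongr
      _ = 384 * x ^ 2 := by
        have := Real.mul_self_sqrt hx0.le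
        linear_combination 384 * x * this
  have a2 : |(π / 4) ^ 2 * x ^ 2 * ∑ p ∈ FP x, 1 / (nu p : ℝ) -
      (π / 4) ^ 3 * (x ^ 2 * Real.log x)| ≤ (π / 4) ^ 2 * K2 * x ^ 2 := by
    have e : (π / 4) ^ 2 * x ^ 2 * ∑ p ∈ FP x, 1 / (nu p : ℝ) - (π / 4) ^ 3 * (x ^ 2 * Real.log x) =
      (π / 4) ^ 2 * x ^ 2 * (∑ p ∈ FP x, 1 / (nu p : ℝ) - π / 4 * Real.log x) := by ring
    rw [e, abs_mul, abs_of_nonneg (by positivity)]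
    calc _ ≤ (π / 4) ^ 2 * x ^ 2 * K2 := by
          have := h2 x hx
          gcongr
      _ = _ := by ring
  have := abs_sub_le (∑ p ∈ FP x, (nu p : ℝ) * ((FP (x / nu p)).card : ℝ) ^ 2)
    ((π / 4) ^ 2 * x ^ 2 * ∑ p ∈ FP x, 1 / (nu p : ℝ)) ((π / 4) ^ 3 * (x ^ 2 * Real.log x))
  linarith

lemma L6 : ∃ K : ℝ, 0 ≤ K ∧ ∀ x : ℝ, 1 ≤ x →
    |∑ p ∈ FP x, (x / nu p) ^ 2 * Real.log (x / nu p) - ZZ * (x ^ 2 * Real.log x)| ≤ K * x ^ 2 := by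
  obtain ⟨K, hK, h⟩ := L4
  refine ⟨2 * K, by positivity, ?_⟩
  intro x hx
  have hx0 : 0 < x := by linarith
  obtain ⟨h1, h2⟩ := h x hx
  have e : ∑ p ∈ FP x, (x / nu p) ^ 2 * Real.log (x / nu p) - ZZ * (x ^ 2 * Real.log x) =
      x ^ 2 * ((∑ p ∈ FP x, 1 / (nu p : ℝ) ^ 2 - ZZ) * Real.log x -
        ∑ p ∈ FP x, Real.log (nu p) / (nu p : ℝ) ^ 2) := by
    have : ∑ p ∈ FP x, (x / nu p) ^ 2 * Real.log (x / nu p) =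
        ∑ p ∈ FP x, (x ^ 2 * Real.log x * (1 / (nu p : ℝ) ^ 2) -
          x ^ 2 * (Real.log (nu p) / (nu p : ℝ) ^ 2)) := by
      apply Finset.sum_congr rfl
      intro p _
      have hn0 : (0:ℝ) < nu p := by linarith [nu_pos p]
      rw [Real.log_div hx0.ne' hn0.ne']
      ring
    rw [this, Finset.sum_sub_distrib, ← Finset.mul_sum, ← Finset.mul_sum]
    ring
  rw [e, abs_mul, abs_of_nonneg (by positivity)]
  have h3 : |(∑ p ∈ FP x, 1 / (nu p : ℝ) ^ 2 - ZZ) * Real.log x| ≤ K := by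
    rw [abs_mul, abs_of_nonneg (Real.log_nonneg hx)]; exact h1
  have h4 := abs_sub ((∑ p ∈ FP x, 1 / (nu p : ℝ) ^ 2 - ZZ) * Real.log x)
    (∑ p ∈ FP x, Real.log (nu p) / (nu p : ℝ) ^ 2)
  have : 0 ≤ x ^ 2 := by positivity
  nlinarith

lemma nu_two {p : ℕ × ℕ} (hp : p ≠ (0, 0)) : (2:ℝ) ≤ nu p := by
  obtain ⟨a, b⟩ := p
  have : 2 ≤ nu (a, b) := by
    simp only [nu]
    by_cases ha : a = 0
    · have hb : b ≠ 0 := by rintro rfl; subst ha; exact hp rfl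
      have : 1 ≤ b := by omega
      nlinarith
    · have : 1 ≤ a := by omega
      nlinarith
  exact_mod_cast this

lemma bootstrap (s : ℝ → ℝ) (K : ℝ) (hK : 0 ≤ K)
    (h : ∀ x : ℝ, 1 ≤ x → |∑ p ∈ FP x, s (x / nu p)| ≤ K * x ^ 2) :
    ∃ M : ℝ, 0 ≤ M ∧ ∀ x : ℝ, 1 ≤ x → |s x| ≤ M * x ^ 2 := by
  classical
  have hZ : 0 < 2 - ZZ := by linarith [ZZ_lt]
  set M := K / (2 - ZZ) with hM
  have hM0 : 0 ≤ M := by positivity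
  have hMe : M * (2 - ZZ) = K := by rw [hM]; field_simp
  refine ⟨M, hM0, ?_⟩
  have main : ∀ n : ℕ, ∀ x : ℝ, 1 ≤ x → x < 2 ^ n → |s x| ≤ M * x ^ 2 := by
    intro n
    induction n with
    | zero => intro x h1 h2; simp at h2; linarith
    | succ n ih =>
      intro x hx hxn
      have h0 : ((0, 0) : ℕ × ℕ) ∈ FP x := by rw [mem_FP]; simp [nu]; exact hx
      have e := Finset.add_sum_erase (FP x) (fun p => s (x / nu p)) h0
      have e' := Finset.add_sum_erase (FP x) (fun p => 1 / (nu p : ℝ) ^ 2) h0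
      have n0 : (nu (0, 0) : ℝ) = 1 := by simp [nu]
      simp only [n0, div_one, one_pow] at e e'
      have hz : ∑ p ∈ FP x, 1 / (nu p : ℝ) ^ 2 ≤ ZZ :=
        summable_nu2.sum_le_tsum _ (fun p _ => by positivity)
      have hb : |∑ p ∈ (FP x).erase (0, 0), s (x / nu p)| ≤ M * x ^ 2 * (ZZ - 1) := by
        refine (Finset.abs_sum_le_sum_abs _ _).trans ?_
        have : ∀ p ∈ (FP x).erase (0, 0), |s (x / nu p)| ≤ M * x ^ 2 * (1 / (nu p : ℝ) ^ 2) := by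
          intro p hp
          rw [Finset.mem_erase, mem_FP] at hp
          have h2 := nu_two hp.1
          have hn0 : (0:ℝ) < nu p := by linarith
          have := ih (x / nu p) (by rw [le_div_iff₀ hn0]; linarith [hp.2])
            (by rw [div_lt_iff₀ hn0]; rw [pow_succ] at hxn
                have : (0:ℝ) < 2 ^ n := by positivity
                nlinarith)
          calc _ ≤ _ := this
            _ = _ := by ring
        refine (Finset.sum_le_sum this).trans ?_
        rw [← Finset.mul_sum]
        have : 0 ≤ M * x ^ 2 := by positivity
        apply mul_le_mul_of_nonneg_left _ this
        linarith
      have hh := h x hx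
      have : s x = ∑ p ∈ FP x, s (x / nu p) - ∑ p ∈ (FP x).erase (0, 0), s (x / nu p) := by linarith
      rw [this]
      have h4 := abs_sub (∑ p ∈ FP x, s (x / nu p)) (∑ p ∈ (FP x).erase (0, 0), s (x / nu p))
      have : K * x ^ 2 + M * x ^ 2 * (ZZ - 1) = M * x ^ 2 := by rw [← hMe]; ring
      linarith
  intro x hx
  obtain ⟨n, hn⟩ := pow_unbounded_of_one_lt x (show (1:ℝ) < 2 by norm_num)
  exact main n x hx hn

lemma L7 : ∃ M : ℝ, 0 ≤ M ∧ ∀ x : ℝ, 1 ≤ x →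
    |SS x - (π / 4) ^ 3 / ZZ * (x ^ 2 * Real.log x)| ≤ M * x ^ 2 := by
  obtain ⟨K5, hK5, h5⟩ := L5
  obtain ⟨K6, hK6, h6⟩ := L6
  have hZ : 0 < ZZ := by linarith [ZZ_ge]
  set d := (π / 4) ^ 3 / ZZ with hd
  have hd0 : 0 ≤ d := by positivity
  have hdZ : d * ZZ = (π / 4) ^ 3 := by rw [hd]; field_simp
  apply bootstrap (fun x => SS x - d * (x ^ 2 * Real.log x)) (K5 + d * K6) (by positivity)
  intro x hx
  rw [Finset.sum_sub_distrib, ← key_FP, ← Finset.mul_sum]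
  have a5 := h5 x hx
  have a6 := h6 x hx
  rw [← hdZ] at a5
  set T := ∑ p ∈ FP x, (nu p : ℝ) * ((FP (x / nu p)).card : ℝ) ^ 2
  set U := ∑ p ∈ FP x, (x / nu p) ^ 2 * Real.log (x / nu p)
  have e : T - d * U = (T - d * ZZ * (x ^ 2 * Real.log x)) - d * (U - ZZ * (x ^ 2 * Real.log x)) := by ring
  rw [e]
  refine (abs_sub _ _).trans ?_
  rw [abs_mul, abs_of_nonneg hd0]
  nlinarith

lemma card_lower : ∃ κ : ℝ, 0 < κ ∧ ∀ x : ℝ, 1 ≤ x → κ * x ≤ ((FP x).card : ℝ) := by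
  refine ⟨1 / 1024, by norm_num, ?_⟩
  intro x hx
  have h := (abs_le.mp (L1 x hx)).1
  have hpi := Real.pi_gt_three
  have hs := Real.mul_self_sqrt (show 0 ≤ x by linarith)
  have hs0 := Real.sqrt_nonneg x
  by_cases hb : x ≤ 1024
  · have h0 : ((0, 0) : ℕ × ℕ) ∈ FP x := by rw [mem_FP]; simp [nu]; exact hx
    have : 1 ≤ (FP x).card := Finset.card_pos.mpr ⟨_, h0⟩
    have : (1:ℝ) ≤ (FP x).card := by exact_mod_cast this
    linarith
  · have h32 : 32 ≤ √x := Real.le_sqrt_of_sq_le (by linarith)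
    nlinarith

lemma zeta_eq : zetaQi2 = ZZ := by
  rw [zetaQi2, ZZ, ← eNZ.tsum_eq]
  simp only [normI_eNZ]

end

theorem expected_gcdNorm_asymptotic :
    ∃ C : ℝ, 0 < C ∧ ∀ x : ℝ, 2 ≤ x →
      |(∑' p : P x, (normI (p.1.1 ⊔ p.1.2) : ℝ)) / ((P x).ncard : ℝ) -
          π / (4 * zetaQi2) * Real.log x| ≤ C := by
  obtain ⟨M, hM, h7⟩ := L7
  obtain ⟨κ, hκ, hlow⟩ := card_lower
  have hZ : 0 < ZZ := by linarith [ZZ_ge]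
  refine ⟨(M + π / (4 * ZZ) * 48) / κ ^ 2 + 1, by positivity, ?_⟩
  intro x hx2
  have hx : 1 ≤ x := by linarith
  have hx0 : 0 < x := by linarith
  rw [(tsum_P x).1, (tsum_P x).2, FI_card, zeta_eq]
  have hA := hlow x hx
  have h := h7 x hx
  have hsq := card_sq x hx
  set A := ((FP x).card : ℝ)
  have hκx : 0 < κ * x := by positivity
  have hA0 : 0 < A := by linarith
  have hlog0 := Real.log_nonneg hx
  have hlog := log_le_two_sqrt hx0
  set g := π / (4 * ZZ) with hg
  have hg0 : 0 < g := by positivity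
  have e : SS x / A ^ 2 - g * Real.log x =
      ((SS x - (π / 4) ^ 3 / ZZ * (x ^ 2 * Real.log x)) -
        g * (Real.log x * (A ^ 2 - (π / 4) ^ 2 * x ^ 2))) / A ^ 2 := by
    rw [hg]; field_simp; ring
  have hb : |Real.log x * (A ^ 2 - (π / 4) ^ 2 * x ^ 2)| ≤ 48 * x ^ 2 := by
    rw [abs_mul, abs_of_nonneg hlog0]
    have hs := Real.mul_self_sqrt hx0.le
    calc _ ≤ (2 * √x) * (24 * (x * √x)) := by gcongr
      _ = 48 * x ^ 2 := by linear_combination 48 * x * hs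
  have hnum : |(SS x - (π / 4) ^ 3 / ZZ * (x ^ 2 * Real.log x)) -
        g * (Real.log x * (A ^ 2 - (π / 4) ^ 2 * x ^ 2))| ≤ (M + g * 48) * x ^ 2 := by
    refine (abs_sub _ _).trans ?_
    rw [abs_mul g, abs_of_pos hg0]
    nlinarith
  rw [e, abs_div, abs_of_pos (show 0 < A ^ 2 by positivity)]
  have : ((M + g * 48) * x ^ 2) / A ^ 2 ≤ (M + g * 48) / κ ^ 2 := by
    rw [div_le_div_iff₀ (by positivity) (by positivity)]
    have h1 : (κ * x) ^ 2 ≤ A ^ 2 := pow_le_pow_left₀ hκx.le hA 2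
    have h2 : 0 ≤ M + g * 48 := by positivity
    nlinarith
  calc _ ≤ ((M + g * 48) * x ^ 2) / A ^ 2 := by gcongr
    _ ≤ _ := this
    _ ≤ _ := by linarith
end

section
/- For every natural number n ≥ 1, four times the number of nonzero ideals I of ℤ[i] with N(I) = n equals r(n), the number of pairs (a, b) ∈ ℤ × ℤ with a² + b² = n. -/
/-- `r n` : the number of pairs `(a, b) ∈ ℤ × ℤ` with `a² + b² = n`. -/
noncomputable def r (n : ℕ) : ℕ := {p : ℤ × ℤ | p.1 ^ 2 + p.2 ^ 2 = (n : ℤ)}.ncard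

open Zsqrtd in
noncomputable def gBasis : Module.Basis (Fin 2) ℤ GaussianInt :=
  Module.Basis.ofEquivFun
    { toFun := fun z => ![z.re, z.im]
      invFun := fun v => ⟨v 0, v 1⟩
      map_add' := by intro x y; ext i; fin_cases i <;> simp
      map_smul' := by intro x y; ext i; fin_cases i <;> simp
      left_inv := by intro x; rfl
      right_inv := by intro v; ext i; fin_cases i <;> simp }

theorem gBasis_repr (z : GaussianInt) (i : Fin 2) : gBasis.repr z i = ![z.re, z.im] i := by
  rw [← Module.Basis.equivFun_apply]
  simp only [gBasis, Module.Basis.equivFun_ofEquivFun]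
  rfl

theorem gBasis_zero : gBasis 0 = ⟨1, 0⟩ := by
  apply gBasis.repr.injective
  ext i
  rw [Module.Basis.repr_self, gBasis_repr]
  fin_cases i <;> simp

theorem gBasis_one : gBasis 1 = ⟨0, 1⟩ := by
  apply gBasis.repr.injective
  ext i
  rw [Module.Basis.repr_self, gBasis_repr]
  fin_cases i <;> simp

theorem algNorm_eq (z : GaussianInt) : Algebra.norm ℤ z = z.norm := by
  rw [Algebra.norm_eq_matrix_det gBasis, Matrix.det_fin_two]
  simp only [Algebra.leftMulMatrix_eq_repr_mul, gBasis_repr, gBasis_zero, gBasis_one, Zsqrtd.norm_def]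
  simp [Zsqrtd.re_mul, Zsqrtd.im_mul]

theorem normI_span_s16 (z : GaussianInt) : normI (Ideal.span {z}) = z.norm.natAbs := by
  have : Module.Free ℤ GaussianInt := Module.Free.of_basis gBasis
  have : Module.Finite ℤ GaussianInt := Module.Finite.of_basis gBasis
  rw [← algNorm_eq, ← Ideal.absNorm_span_singleton]
  rfl

def gUnits : Finset GaussianInt := {⟨1, 0⟩, ⟨-1, 0⟩, ⟨0, 1⟩, ⟨0, -1⟩}

theorem mem_gUnits (u : GaussianInt) : u ∈ gUnits ↔ u.norm = 1 := by
  constructor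
  · intro h
    simp only [gUnits, Finset.mem_insert, Finset.mem_singleton] at h
    rcases h with rfl | rfl | rfl | rfl <;> simp [Zsqrtd.norm_def]
  · intro h
    obtain ⟨a, b⟩ := u
    simp only [Zsqrtd.norm_def] at h
    have ha1 : a ≤ 1 := by nlinarith [mul_self_nonneg b]
    have ha2 : -1 ≤ a := by nlinarith [mul_self_nonneg b]
    have hb1 : b ≤ 1 := by nlinarith [mul_self_nonneg a]
    have hb2 : -1 ≤ b := by nlinarith [mul_self_nonneg a]
    interval_cases a <;> interval_cases b <;> simp_all [gUnits]

open Submodule.IsPrincipal in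
theorem four_mul_idealCount_eq_r (n : ℕ) (hn : 1 ≤ n) :
    4 * {I : Ideal GaussianInt | I ≠ ⊥ ∧ normI I = n}.ncard = r n := by
  set S := {I : Ideal GaussianInt | I ≠ ⊥ ∧ normI I = n} with hS
  have hgen : ∀ I : Ideal GaussianInt, Ideal.span {generator I} = I :=
    fun I => Ideal.span_singleton_generator I
  have hI : ∀ I : Ideal GaussianInt, ((normI I : ℕ) : ℤ) = (generator I).norm := by
    intro I
    conv_lhs => rw [← hgen I]
    rw [normI_span_s16, GaussianInt.abs_natCast_norm]
  have hunit : ∀ u : GaussianInt, u ∈ gUnits ↔ IsUnit u := by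
    intro u
    rw [mem_gUnits, Zsqrtd.norm_eq_one_iff' (by norm_num)]
  let g : Ideal GaussianInt × GaussianInt → ℤ × ℤ :=
    fun p => ((generator p.1 * p.2).re, (generator p.1 * p.2).im)
  have hinj : Set.InjOn g (S ×ˢ (gUnits : Set GaussianInt)) := by
    rintro ⟨I, u⟩ ⟨h1, hu⟩ ⟨J, v⟩ ⟨h2, hv⟩ h
    simp only [Finset.mem_coe, hunit] at hu hv
    have h' : generator I * u = generator J * v := by
      simp only [g, Prod.mk.injEq] at h
      exact Zsqrtd.ext h.1 h.2
    have hIJ : I = J := by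
      rw [← hgen I, ← hgen J, ← Ideal.span_singleton_mul_right_unit hu,
        ← Ideal.span_singleton_mul_right_unit hv (generator J), h']
    subst hIJ
    have h0 : generator I ≠ 0 := by
      intro h0
      exact h1.1 ((eq_bot_iff_generator_eq_zero I).2 h0)
    rw [mul_left_cancel₀ h0 h']
  have himg : g '' (S ×ˢ (gUnits : Set GaussianInt)) =
      {p : ℤ × ℤ | p.1 ^ 2 + p.2 ^ 2 = (n : ℤ)} := by
    ext ⟨a, b⟩
    constructor
    · rintro ⟨⟨I, u⟩, ⟨h1, hu⟩, h⟩
      have hu' := (mem_gUnits u).1 hu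
      have hN : (generator I * u).norm = n := by
        rw [Zsqrtd.norm_mul, hu', ← hI, h1.2, mul_one]
      simp only [g, Prod.mk.injEq] at h
      rw [Zsqrtd.norm_def, h.1, h.2] at hN
      change a ^ 2 + b ^ 2 = (n : ℤ)
      linarith
    · intro h
      change a ^ 2 + b ^ 2 = (n : ℤ) at h
      have hz : (⟨a, b⟩ : GaussianInt).norm = n := by
        rw [Zsqrtd.norm_def]; simp only; linarith
      have hA : Associated (generator (Ideal.span {(⟨a, b⟩ : GaussianInt)})) ⟨a, b⟩ :=
        Ideal.span_singleton_eq_span_singleton.1 (hgen _)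
      obtain ⟨u, hu⟩ := hA
      refine ⟨(Ideal.span {(⟨a, b⟩ : GaussianInt)}, u), ⟨⟨?_, ?_⟩, ?_⟩, ?_⟩
      · intro hb
        rw [Ideal.span_singleton_eq_bot] at hb
        rw [hb, Zsqrtd.norm_zero] at hz
        omega
      · rw [normI_span_s16, hz]; simp
      · exact (hunit _).2 u.isUnit
      · simp only [g, hu]
  have hc : (gUnits : Set GaussianInt).ncard = 4 := by
    rw [Set.ncard_coe_finset]; decide
  rw [r, ← himg, Set.InjOn.ncard_image hinj, Set.ncard_prod, hc, mul_comm]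
end
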